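/- For every real x > 0 and every real α that is not an integer, ∫₀^∞ u^{α−1} e^{−u} e^{−x/u} du = Γ(α)·ψ(1 − α, x) + Γ(−α)·x^α·ψ(1 + α, x). -/

import Mathlib

/-!
Write `I(α, x)` for the integral and `R(α, x)` for the right-hand side. Both satisfy the same two
relations for `x > 0`:

* `∂ₓ F(α, x) = -F(α - 1, x)`: differentiation under the integral sign for `I`; for `R`, termwise
  differentiation of the series together with the contiguous relation
  `ψ(a) = ψ(a + 1) + x / (a (a + 1)) ψ(a + 2)`;
* `F(α, x) = x^α F(-α, x)`: the substitution `u ↦ x / u` for `I`; immediate for `R`.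

For `0 < α < 1` the two relations turn `(F(α, ·), F(1 - α, ·))` into a solution of the linear system
`y₁' = -x^(α-1) y₂`, `y₂' = -x^(-α) y₁`, and both solutions `I` and `R` tend to
`(Γ(α), Γ(1 - α))` as `x → 0⁺`. Since the coefficients are integrable at `0`, a Grönwall argument
shows that the solutions agree (`kummerInt_eq_of_mem_Ioo`). Differentiating the identity in `x`
lowers `α` by one, which settles all non-integer `α < 1`, and the symmetry `α ↦ -α` settles the rest.
-/

open MeasureTheory
open scoped Nat

/-- The series ψ(α,x) = ∑ xⁿ/((α)ₙ · n!). -/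
noncomputable def kummerPsi (α x : ℝ) : ℝ :=
  ∑' n : ℕ, x ^ n / ((ascPochhammer ℝ n).eval α * (n ! : ℝ))

/-! ### The series ψ -/

lemma poch_succ (a : ℝ) (n : ℕ) :
    (ascPochhammer ℝ (n + 1)).eval a = a * (ascPochhammer ℝ n).eval (a + 1) := by
  simp [ascPochhammer_succ_left]

lemma poch_ne {a : ℝ} (ha : ∀ k : ℤ, a ≠ k) (n : ℕ) : (ascPochhammer ℝ n).eval a ≠ 0 := by
  induction n with
  | zero => simp
  | succ n ih =>
    rw [ascPochhammer_succ_eval]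
    refine mul_ne_zero ih fun h => ha (-n) ?_
    push_cast
    linarith

lemma nonint_add {a : ℝ} (ha : ∀ k : ℤ, a ≠ k) (m : ℤ) : ∀ k : ℤ, a + m ≠ k := fun k h =>
  ha (k - m) (by push_cast; linarith)

lemma nonint_neg {a : ℝ} (ha : ∀ k : ℤ, a ≠ k) : ∀ k : ℤ, -a ≠ k := fun k h =>
  ha (-k) (by push_cast; linarith)

lemma summable_psi {a : ℝ} (ha : ∀ k : ℤ, a ≠ k) (x : ℝ) :
    Summable fun n : ℕ => x ^ n / ((ascPochhammer ℝ n).eval a * (n ! : ℝ)) := by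
  rcases eq_or_ne x 0 with rfl | hx
  · refine summable_of_ne_finset_zero (s := {0}) fun n hn => ?_
    rw [zero_pow (by simpa using hn), zero_div]
  refine summable_of_ratio_test_tendsto_lt_one (l := 0) one_pos
    (.of_forall fun n => div_ne_zero (pow_ne_zero _ hx)
      (mul_ne_zero (poch_ne ha n) (by positivity))) ?_
  have h1 : Filter.Tendsto (fun n : ℕ => (a + n) * ((n : ℝ) + 1)) Filter.atTop Filter.atTop :=
    (Filter.tendsto_atTop_add_const_left _ a tendsto_natCast_atTop_atTop).atTop_mul_atTop₀
      (Filter.tendsto_atTop_add_const_right _ 1 tendsto_natCast_atTop_atTop)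
  have h2 := (h1.const_div_atTop x).norm
  rw [norm_zero] at h2
  refine h2.congr fun n => ?_
  rw [← norm_div]
  congr 1
  have := poch_ne ha n
  have h3 := poch_ne ha (n + 1)
  rw [ascPochhammer_succ_eval] at h3
  have h4 := right_ne_zero_of_mul h3
  rw [ascPochhammer_succ_eval, Nat.factorial_succ]
  push_cast
  field_simp
  ring

/-- Termwise differentiation: `∂ₓ ψ(a, x) = ψ(a + 1, x) / a`. -/
lemma hasDerivAt_psi {a : ℝ} (ha : ∀ k : ℤ, a ≠ k) (x : ℝ) :
    HasDerivAt (kummerPsi a) (kummerPsi (a + 1) x / a) x := by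
  have ha1 : ∀ k : ℤ, a + 1 ≠ k := by simpa using nonint_add ha 1
  have ha0 : a ≠ 0 := by simpa using ha 0
  have hs (n : ℕ) (y : ℝ) : ((n + 1 : ℕ) : ℝ) * y ^ (n + 1 - 1) /
      ((ascPochhammer ℝ (n + 1)).eval a * ((n + 1)! : ℝ)) =
      y ^ n / ((ascPochhammer ℝ n).eval (a + 1) * (n ! : ℝ)) / a := by
    have := poch_ne ha1 n
    rw [poch_succ, Nat.factorial_succ, Nat.add_sub_cancel]
    push_cast
    field_simp
  have hsum (y : ℝ) : Summable fun n : ℕ => (n : ℝ) * y ^ (n - 1) /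
      ((ascPochhammer ℝ n).eval a * (n ! : ℝ)) := by
    rw [← summable_nat_add_iff 1]
    simp only [hs]
    exact (summable_psi ha1 y).div_const a
  have key := hasDerivAt_tsum_of_isPreconnected
    (g := fun (n : ℕ) (y : ℝ) => y ^ n / ((ascPochhammer ℝ n).eval a * (n ! : ℝ)))
    (g' := fun (n : ℕ) (y : ℝ) => (n : ℝ) * y ^ (n - 1) /
      ((ascPochhammer ℝ n).eval a * (n ! : ℝ)))
    (t := Metric.ball (0 : ℝ) (|x| + 1)) (hsum (|x| + 1)).norm Metric.isOpen_ball
    (convex_ball _ _).isPreconnected (fun n y _ => (hasDerivAt_pow n y).div_const _)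
    (fun n y hy => by
      have hy' : |y| ≤ |x| + 1 := by simpa using (mem_ball_zero_iff.1 hy).le
      simp only [norm_div, norm_mul, norm_pow]
      rw [Real.norm_eq_abs y, Real.norm_eq_abs (|x| + 1),
        abs_of_pos (by positivity : 0 < |x| + 1)]
      gcongr)
    (y₀ := x) (y := x) (by simp) (summable_psi ha x) (by simp)
  rw [(hsum x).tsum_eq_zero_add] at key
  simp only [hs, tsum_div_const] at key
  refine HasDerivAt.congr_deriv key ?_
  simp [kummerPsi]

/-- Contiguous relation between the parameters `a`, `a + 1`, `a + 2`. -/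
lemma psi_contig {a : ℝ} (ha : ∀ k : ℤ, a ≠ k) (x : ℝ) :
    kummerPsi a x = kummerPsi (a + 1) x + x / (a * (a + 1)) * kummerPsi (a + 2) x := by
  have ha1 : ∀ k : ℤ, a + 1 ≠ k := by simpa using nonint_add ha 1
  have ha2 : ∀ k : ℤ, a + 2 ≠ k := by simpa using nonint_add ha 2
  have ha0 : a ≠ 0 := by simpa using ha 0
  have ha10 : a + 1 ≠ 0 := by simpa using ha1 0
  have h0 := (summable_nat_add_iff 1).2 (summable_psi ha x)
  have h1 := (summable_nat_add_iff 1).2 (summable_psi ha1 x)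
  unfold kummerPsi
  rw [(summable_psi ha x).tsum_eq_zero_add, (summable_psi ha1 x).tsum_eq_zero_add,
    ← tsum_mul_left, add_assoc, ← h1.tsum_add ((summable_psi ha2 x).mul_left _)]
  congr 1
  · simp
  refine tsum_congr fun n => ?_
  have e1 : (ascPochhammer ℝ (n + 1)).eval a = a * (ascPochhammer ℝ n).eval (a + 1) :=
    poch_succ a n
  have e2 : (ascPochhammer ℝ (n + 1)).eval (a + 1) =
      (ascPochhammer ℝ n).eval (a + 1) * (a + 1 + n) := ascPochhammer_succ_eval _ _
  have e3 := poch_succ (a + 1) n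
  rw [show a + 1 + 1 = a + 2 by ring, e2] at e3
  have hp := poch_ne ha1 n
  have hp1 := poch_ne ha1 (n + 1)
  rw [e2] at hp1
  have hn := right_ne_zero_of_mul hp1
  have e4 : (ascPochhammer ℝ n).eval (a + 2) =
    (ascPochhammer ℝ n).eval (a + 1) * (a + 1 + n) / (a + 1) := by
    field_simp
    linarith
  rw [e1, e2, e4, Nat.factorial_succ]
  push_cast
  field_simp
  ring

lemma psi_zero (a : ℝ) : kummerPsi a 0 = 1 := by
  unfold kummerPsi
  rw [tsum_eq_single 0 fun n hn => by rw [zero_pow hn, zero_div]]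
  simp

/-! ### The integral -/

/-- The integral `I(α, x) = ∫₀^∞ u^(α-1) e^(-u) e^(-x/u) du`. -/
noncomputable def kummerInt (α x : ℝ) : ℝ :=
  ∫ u in Set.Ioi (0 : ℝ), u ^ (α - 1) * Real.exp (-u) * Real.exp (-(x / u))

/-- The closed form `R(α, x) = Γ(α) ψ(1 - α, x) + Γ(-α) x^α ψ(1 + α, x)`. -/
noncomputable def kummerRhs (α x : ℝ) : ℝ :=
  Real.Gamma α * kummerPsi (1 - α) x + Real.Gamma (-α) * x ^ α * kummerPsi (1 + α) x

lemma integrable_kernel (α : ℝ) {x : ℝ} (hx : 0 < x) :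
    IntegrableOn (fun u : ℝ => u ^ (α - 1) * Real.exp (-u) * Real.exp (-(x / u)))
      (Set.Ioi 0) := by
  obtain ⟨n, hn⟩ := exists_nat_gt (-α)
  have hg := (Real.GammaIntegral_convergent (s := α + n) (by linarith)).const_mul (n ! / x ^ n)
  refine hg.mono' (by fun_prop) ((ae_restrict_mem measurableSet_Ioi).mono fun u hu => ?_)
  have hu : 0 < u := hu
  rw [Real.norm_of_nonneg (by positivity)]
  -- `e^(-y) ≤ n! / y^n` at `y = x / u` trades the essential singularity for `n` powers of `u`.
  have h := Real.pow_div_factorial_le_exp (x / u) (by positivity) n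
  have h' : Real.exp (-(x / u)) ≤ n ! / x ^ n * u ^ n := by
    rw [Real.exp_neg]
    refine (inv_anti₀ (by positivity) h).trans_eq ?_
    rw [div_pow]
    field_simp
  calc u ^ (α - 1) * Real.exp (-u) * Real.exp (-(x / u))
      ≤ u ^ (α - 1) * Real.exp (-u) * (n ! / x ^ n * u ^ n) := by gcongr
    _ = n ! / x ^ n * (Real.exp (-u) * u ^ (α + n - 1)) := by
      rw [show α + n - 1 = (α - 1) + n by ring, Real.rpow_add_natCast hu.ne']
      ring

lemma hasDerivAt_kummerInt (α : ℝ) {x : ℝ} (hx : 0 < x) :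
    HasDerivAt (kummerInt α) (-kummerInt (α - 1) x) x := by
  have h := (hasDerivAt_integral_of_dominated_loc_of_deriv_le
    (μ := volume.restrict (Set.Ioi (0 : ℝ))) (x₀ := x) (s := Set.Ioi (x / 2))
    (F := fun x u => u ^ (α - 1) * Real.exp (-u) * Real.exp (-(x / u)))
    (F' := fun x u => -(u ^ (α - 1 - 1) * Real.exp (-u) * Real.exp (-(x / u))))
    (bound := fun u => u ^ (α - 1 - 1) * Real.exp (-u) * Real.exp (-(x / 2 / u)))
    (Ioi_mem_nhds (by linarith)) (.of_forall fun y => by fun_prop) (integrable_kernel α hx)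
    (by fun_prop) ?_ (integrable_kernel (α - 1) (by positivity)) ?_).2
  · rw [integral_neg] at h
    exact h
  · refine (ae_restrict_mem measurableSet_Ioi).mono fun u hu y hy => ?_
    have hu : 0 < u := hu
    have hy : x / 2 < y := hy
    rw [norm_neg, Real.norm_of_nonneg (by positivity)]
    gcongr
  · refine (ae_restrict_mem measurableSet_Ioi).mono fun u hu y _ => ?_
    have hu : 0 < u := hu
    have := (((hasDerivAt_id y).div_const u).neg.exp).const_mul (u ^ (α - 1) * Real.exp (-u))
    refine HasDerivAt.congr_deriv this ?_
    rw [Real.rpow_sub_one hu.ne' (α - 1)]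
    simp only [id, Pi.neg_apply]
    field_simp

/-- The substitution `u ↦ x / u`. -/
lemma kummerInt_symm (α : ℝ) {x : ℝ} (hx : 0 < x) :
    kummerInt α x = x ^ α * kummerInt (-α) x := by
  have h1 := integral_comp_rpow_Ioi
    (fun u : ℝ => u ^ (α - 1) * Real.exp (-u) * Real.exp (-(x / u))) (p := -1) (by norm_num)
  have h2 := integral_comp_mul_left_Ioi
    (fun u : ℝ => u ^ (-α - 1) * Real.exp (-u) * Real.exp (-(x / u))) 0 hx
  rw [mul_zero] at h2
  have h3 : kummerInt (-α) x = x * (x⁻¹ * kummerInt (-α) x) := by field_simp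
  unfold kummerInt at h3 ⊢
  rw [smul_eq_mul] at h2
  rw [h3, ← h2, ← h1, ← mul_assoc, ← integral_const_mul]
  refine setIntegral_congr_fun measurableSet_Ioi fun u hu => ?_
  have hu : 0 < u := hu
  have e1 : x / (x * u) = u⁻¹ := by field_simp
  have e2 : x / u⁻¹ = x * u := by field_simp
  simp only [Real.rpow_neg_one, smul_eq_mul, e1, e2]
  rw [Real.mul_rpow hx.le hu.le, Real.inv_rpow hu.le, Real.rpow_sub_one hx.ne',
    Real.rpow_sub_one hu.ne', Real.rpow_sub_one hu.ne', Real.rpow_sub_one hu.ne',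
    Real.rpow_neg hx.le α, Real.rpow_neg hu.le α, Real.rpow_neg_one]
  have := Real.rpow_pos_of_pos hx α
  have := Real.rpow_pos_of_pos hu α
  simp only [abs_neg, abs_one]
  field_simp

lemma tendsto_kummerInt {α : ℝ} (hα : 0 < α) :
    Filter.Tendsto (kummerInt α) (nhdsWithin 0 (Set.Ioi 0)) (nhds (Real.Gamma α)) := by
  rw [Real.Gamma_eq_integral hα]
  refine tendsto_integral_filter_of_dominated_convergence
    (fun u => Real.exp (-u) * u ^ (α - 1)) (.of_forall fun y => by fun_prop) ?_
    (Real.GammaIntegral_convergent hα) ?_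
  · filter_upwards [self_mem_nhdsWithin] with x hx
    refine (ae_restrict_mem measurableSet_Ioi).mono fun u hu => ?_
    have hu : 0 < u := hu
    have hx : 0 < x := hx
    rw [Real.norm_of_nonneg (by positivity), mul_comm (Real.exp _)]
    exact mul_le_of_le_one_right (by positivity) (Real.exp_le_one_iff.2 (by
      have : 0 < x / u := by positivity
      linarith))
  · refine .of_forall fun u => Filter.Tendsto.mono_left ?_ nhdsWithin_le_nhds
    have : Continuous fun x : ℝ => u ^ (α - 1) * Real.exp (-u) * Real.exp (-(x / u)) := by
      fun_prop
    convert this.tendsto 0 using 2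
    simp [mul_comm]

/-! ### The closed form -/

lemma kummerRhs_symm (α : ℝ) {x : ℝ} (hx : 0 < x) :
    kummerRhs α x = x ^ α * kummerRhs (-α) x := by
  have := Real.rpow_pos_of_pos hx α
  unfold kummerRhs
  rw [neg_neg, Real.rpow_neg hx.le, sub_neg_eq_add, ← sub_eq_add_neg]
  field_simp
  ring

lemma hasDerivAt_kummerRhs {α : ℝ} (hα : ∀ k : ℤ, α ≠ k) {x : ℝ} (hx : 0 < x) :
    HasDerivAt (kummerRhs α) (-kummerRhs (α - 1) x) x := by
  have hm : ∀ k : ℤ, 1 - α ≠ k := by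
    have := nonint_add (nonint_neg hα) 1
    intro k; convert this k using 1; push_cast; ring
  have hp : ∀ k : ℤ, 1 + α ≠ k := by
    have := nonint_add hα 1
    intro k; convert this k using 1; push_cast; ring
  have ha0 : α ≠ 0 := by simpa using hα 0
  have hm0 : 1 - α ≠ 0 := by simpa using hm 0
  have hm0' : α - 1 ≠ 0 := fun h => hm0 (by linarith)
  have hp0 : 1 + α ≠ 0 := by simpa using hp 0
  have h := ((hasDerivAt_psi hm x).const_mul (Real.Gamma α)).add
    (((Real.hasDerivAt_rpow_const (p := α) (Or.inl hx.ne')).const_mul (Real.Gamma (-α))).mul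
      (hasDerivAt_psi hp x))
  refine h.congr_deriv ?_
  have g1 : Real.Gamma α = (α - 1) * Real.Gamma (α - 1) := by
    rw [← Real.Gamma_add_one hm0', sub_add_cancel]
  have g2 : Real.Gamma (1 - α) = -α * Real.Gamma (-α) := by
    rw [← Real.Gamma_add_one (neg_ne_zero.2 ha0)]; ring_nf
  have c := psi_contig hα x
  unfold kummerRhs
  rw [show 1 - (α - 1) = 1 - α + 1 by ring, show -(α - 1) = 1 - α by ring,
    show 1 + (α - 1) = α by ring, g1, g2, c, show 1 + α + 1 = α + 2 by ring, add_comm 1 α,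
    Real.rpow_sub_one hx.ne']
  rw [add_comm] at hp0
  field_simp
  ring

lemma tendsto_kummerRhs {α : ℝ} (hα : ∀ k : ℤ, α ≠ k) (h0 : 0 < α) :
    Filter.Tendsto (kummerRhs α) (nhdsWithin 0 (Set.Ioi 0)) (nhds (Real.Gamma α)) := by
  refine Filter.Tendsto.mono_left ?_ nhdsWithin_le_nhds
  have hm : ∀ k : ℤ, 1 - α ≠ k := by
    have := nonint_add (nonint_neg hα) 1
    intro k; convert this k using 1; push_cast; ring
  have hp : ∀ k : ℤ, 1 + α ≠ k := by
    have := nonint_add hα 1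
    intro k; convert this k using 1; push_cast; ring
  have h : ContinuousAt (kummerRhs α) 0 :=
    (continuousAt_const.mul (hasDerivAt_psi hm 0).continuousAt).add
      ((continuousAt_const.mul (Real.continuousAt_rpow_const 0 α (Or.inr h0.le))).mul
        (hasDerivAt_psi hp 0).continuousAt)
  convert h.tendsto using 2
  simp [kummerRhs, psi_zero, Real.zero_rpow h0.ne']

/-! ### Equality of the two sides -/

/-- The case `0 < α < 1`. The errors `D₁, D₂` for the exponents `α, 1 - α` satisfy the linear system
`D₁' = -x^(α-1) D₂`, `D₂' = -x^(-α) D₁` and vanish at `0⁺`. As both coefficients are integrable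
at `0`, Grönwall's argument applied to `D₁² + D₂²` forces `D₁ = D₂ = 0`. -/
lemma kummerInt_eq_of_mem_Ioo {α : ℝ} (hα : ∀ k : ℤ, α ≠ k) (h0 : 0 < α) (h1 : α < 1)
    {x : ℝ} (hx : 0 < x) : kummerInt α x = kummerRhs α x := by
  have hm : ∀ k : ℤ, 1 - α ≠ k := by
    have := nonint_add (nonint_neg hα) 1
    intro k; convert this k using 1; push_cast; ring
  have hm0 : 0 < 1 - α := by linarith
  set D₁ : ℝ → ℝ := fun y => kummerInt α y - kummerRhs α y with hD₁
  set D₂ : ℝ → ℝ := fun y => kummerInt (1 - α) y - kummerRhs (1 - α) y with hD₂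
  have d₁ {y : ℝ} (hy : 0 < y) : HasDerivAt D₁ (-(y ^ (α - 1) * D₂ y)) y := by
    refine ((hasDerivAt_kummerInt α hy).sub (hasDerivAt_kummerRhs hα hy)).congr_deriv ?_
    rw [kummerInt_symm (α - 1) hy, kummerRhs_symm (α - 1) hy, neg_sub]
    ring
  have d₂ {y : ℝ} (hy : 0 < y) : HasDerivAt D₂ (-(y ^ (-α) * D₁ y)) y := by
    refine ((hasDerivAt_kummerInt _ hy).sub (hasDerivAt_kummerRhs hm hy)).congr_deriv ?_
    rw [show 1 - α - 1 = -α by ring, kummerInt_symm (-α) hy, kummerRhs_symm (-α) hy, neg_neg]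
    ring
  have t₁ : Filter.Tendsto D₁ (nhdsWithin 0 (Set.Ioi 0)) (nhds 0) := by
    simpa using (tendsto_kummerInt h0).sub (tendsto_kummerRhs hα h0)
  have t₂ : Filter.Tendsto D₂ (nhdsWithin 0 (Set.Ioi 0)) (nhds 0) := by
    simpa using (tendsto_kummerInt hm0).sub (tendsto_kummerRhs hm hm0)
  -- `K` is a primitive of the sum of the two coefficients.
  set K : ℝ → ℝ := fun y => y ^ α / α + y ^ (1 - α) / (1 - α) with hK
  have dK {y : ℝ} (hy : 0 < y) : HasDerivAt K (y ^ (α - 1) + y ^ (-α)) y := by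
    refine (((Real.hasDerivAt_rpow_const (p := α) (Or.inl hy.ne')).div_const α).add
      ((Real.hasDerivAt_rpow_const (p := 1 - α) (Or.inl hy.ne')).div_const (1 - α))).congr_deriv ?_
    rw [show 1 - α - 1 = -α by ring]
    field_simp
  have tK : Filter.Tendsto K (nhdsWithin 0 (Set.Ioi 0)) (nhds (K 0)) :=
    (((Real.continuousAt_rpow_const 0 α (Or.inr h0.le)).div_const α).add
      ((Real.continuousAt_rpow_const 0 (1 - α) (Or.inr hm0.le)).div_const
        (1 - α))).tendsto.mono_left nhdsWithin_le_nhds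
  set E : ℝ → ℝ := fun y => (D₁ y ^ 2 + D₂ y ^ 2) * Real.exp (-K y) with hE
  have dE {y : ℝ} (hy : 0 < y) : HasDerivAt E
      (-((y ^ (α - 1) + y ^ (-α)) * (D₁ y + D₂ y) ^ 2 * Real.exp (-K y))) y := by
    refine ((((d₁ hy).pow 2).add ((d₂ hy).pow 2)).mul (dK hy).neg.exp).congr_deriv ?_
    simp
    ring
  have tE : Filter.Tendsto E (nhdsWithin 0 (Set.Ioi 0)) (nhds 0) := by
    simpa using ((t₁.pow 2).add (t₂.pow 2)).mul (Real.continuous_exp.tendsto _ |>.comp tK.neg)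
  have anti : AntitoneOn E (Set.Ioi 0) := by
    refine antitoneOn_of_deriv_nonpos (convex_Ioi 0)
      (fun y hy => (dE hy).continuousAt.continuousWithinAt) ?_ ?_
    · rw [interior_Ioi]
      exact fun y hy => (dE hy).differentiableAt.differentiableWithinAt
    · rw [interior_Ioi]
      intro y hy
      rw [(dE hy).deriv]
      have hy : 0 < y := hy
      have p1 := Real.rpow_pos_of_pos hy (α - 1)
      have p2 := Real.rpow_pos_of_pos hy (-α)
      rw [neg_nonpos]
      positivity
  have hle : E x ≤ 0 := by
    refine ge_of_tendsto tE ?_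
    filter_upwards [Ioo_mem_nhdsGT hx] with y hy
    exact anti hy.1 hx hy.2.le
  have hsq : D₁ x ^ 2 + D₂ x ^ 2 ≤ 0 := nonpos_of_mul_nonpos_left hle (Real.exp_pos _)
  have : D₁ x = 0 := by nlinarith [sq_nonneg (D₁ x), sq_nonneg (D₂ x)]
  exact sub_eq_zero.1 this

/-- Differentiating the identity in `x` lowers the exponent by one. -/
lemma kummerInt_eq_sub_one {α : ℝ} (hα : ∀ k : ℤ, α ≠ k)
    (h : ∀ x, 0 < x → kummerInt α x = kummerRhs α x) {x : ℝ} (hx : 0 < x) :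
    kummerInt (α - 1) x = kummerRhs (α - 1) x := by
  have h1 := (hasDerivAt_kummerInt α hx).congr_of_eventuallyEq
    (f₁ := kummerRhs α) (by filter_upwards [Ioi_mem_nhds hx] with y hy using (h y hy).symm)
  exact neg_injective (h1.unique (hasDerivAt_kummerRhs hα hx))

lemma kummerInt_eq_of_lt_one {α : ℝ} (hα : ∀ k : ℤ, α ≠ k) (h1 : α < 1)
    {x : ℝ} (hx : 0 < x) : kummerInt α x = kummerRhs α x := by
  obtain ⟨n, hn⟩ := exists_nat_gt (-α)
  induction n generalizing α x with
  | zero => exact kummerInt_eq_of_mem_Ioo hα (by simpa using hn) h1 hx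
  | succ n ih =>
    rcases lt_or_ge 0 α with h0 | h0
    · exact kummerInt_eq_of_mem_Ioo hα h0 h1 hx
    have h0' : α < 0 := lt_of_le_of_ne h0 (by simpa using hα 0)
    have hα1 : ∀ k : ℤ, α + 1 ≠ k := by simpa using nonint_add hα 1
    have := kummerInt_eq_sub_one hα1
      (fun y hy => ih hα1 (by linarith) hy (by push_cast at hn; linarith)) hx
    simpa using this

/-- ∫₀^∞ u^{α−1} e^{−u} e^{−x/u} du = Γ(α)·ψ(1−α,x) + Γ(−α)·x^α·ψ(1+α,x). -/
theorem kummer_integral_eval (α x : ℝ) (hx : 0 < x) (hα : ∀ k : ℤ, α ≠ (k : ℝ)) :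
    ∫ u in Set.Ioi (0 : ℝ), u ^ (α - 1) * Real.exp (-u) * Real.exp (-(x / u))
      = Real.Gamma α * kummerPsi (1 - α) x + Real.Gamma (-α) * x ^ α * kummerPsi (1 + α) x := by
  change kummerInt α x = kummerRhs α x
  rcases lt_or_ge α 1 with h | h
  · exact kummerInt_eq_of_lt_one hα h hx
  · rw [kummerInt_symm α hx, kummerRhs_symm α hx,
      kummerInt_eq_of_lt_one (nonint_neg hα) (by linarith) hx]
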